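/- Let k ≥ 1 be a real number and suppose that every row of the matrix A has ℓ² norm at most k. Then every coordinate of every vertex solution to the system Σ is at most n^{1/2}·k^{n−1}. (Theorem 8.1(1).) -/

import Mathlib

/-- A solution to the system Σ: `A x = 0`, all coordinates nonnegative, and for each
pair `(i, j)` in `C`, `x i = 0` or `x j = 0`. -/
def IsSolution {m n : ℕ} (A : Matrix (Fin m) (Fin n) ℤ)
    (C : Finset (Fin n × Fin n)) (x : Fin n → ℝ) : Prop :=
  (∀ i : Fin m, ∑ j : Fin n, (A i j : ℝ) * x j = 0) ∧
    (∀ j : Fin n, 0 ≤ x j) ∧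
    (∀ p ∈ C, x p.1 = 0 ∨ x p.2 = 0)

/-- A vector is integral if every coordinate is an integer. -/
def IsIntegralVec {n : ℕ} (x : Fin n → ℝ) : Prop :=
  ∀ j : Fin n, ∃ z : ℤ, x j = (z : ℝ)

/-- An integral solution `x` is a vertex solution if (i) whenever `k • x = y + z` for a
positive real `k` and solutions `y`, `z`, both `y` and `z` are scalar multiples of `x`;
and (ii) `x` is not `k • y` for an integer `k ≥ 2` and an integral solution `y`. -/
def IsVertexSolution {m n : ℕ} (A : Matrix (Fin m) (Fin n) ℤ)
    (C : Finset (Fin n × Fin n)) (x : Fin n → ℝ) : Prop :=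
  IsSolution A C x ∧ IsIntegralVec x ∧
    (∀ k : ℝ, 0 < k → ∀ y z : Fin n → ℝ, IsSolution A C y → IsSolution A C z →
      k • x = y + z → (∃ c : ℝ, y = c • x) ∧ ∃ c : ℝ, z = c • x) ∧
    ¬∃ (k : ℤ) (y : Fin n → ℝ), 2 ≤ k ∧ IsSolution A C y ∧ IsIntegralVec y ∧
      x = (k : ℝ) • y

/-- An integral solution is fundamental if it is not the sum of two nonzero
integral solutions. -/
def IsFundamental {m n : ℕ} (A : Matrix (Fin m) (Fin n) ℤ)
    (C : Finset (Fin n × Fin n)) (x : Fin n → ℝ) : Prop :=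
  IsSolution A C x ∧ IsIntegralVec x ∧
    ¬∃ y z : Fin n → ℝ, IsSolution A C y ∧ IsIntegralVec y ∧
      IsSolution A C z ∧ IsIntegralVec z ∧ y ≠ 0 ∧ z ≠ 0 ∧ x = y + z

/-- **Hadamard's inequality** for real square matrices, in terms of the rows. -/
theorem Matrix.abs_det_le_prod_sqrt_sum_sq {n : ℕ} (M : Matrix (Fin n) (Fin n) ℝ) :
    |M.det| ≤ ∏ i, √(∑ j, M i j ^ 2) := by
  let b := EuclideanSpace.basisFun (Fin n) ℝ
  have : Fact (Module.finrank ℝ (EuclideanSpace ℝ (Fin n)) = n) := ⟨by simp⟩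
  have h := b.toBasis.orientation.abs_volumeForm_apply_le fun i => WithLp.toLp 2 (M i)
  rw [Orientation.volumeForm_robust _ b rfl, Module.Basis.det_apply] at h
  have hM : b.toBasis.toMatrix (fun i => WithLp.toLp 2 (M i)) = M.transpose := by
    ext i j
    simp [b, Module.Basis.toMatrix_apply]
  simpa [hM, EuclideanSpace.norm_eq] using h

/-- If only the zero vector is orthogonal to the unit vector `Pi.single l 1` and to all of `R`,
then that unit vector can be completed by elements of `R` to a nonsingular matrix. -/
theorem exists_det_ne_zero_of_orthogonal_eq_zero {n : ℕ} (R : Set (Fin n → ℤ)) (l : Fin n)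
    (hR : ∀ v : Fin n → ℝ, v l = 0 → (∀ r ∈ R, ∑ j, (r j : ℝ) * v j = 0) → v = 0) :
    ∃ (M : Matrix (Fin n) (Fin n) ℤ) (i₀ : Fin n),
      M i₀ = Pi.single l 1 ∧ (∀ i ≠ i₀, M i ∈ R) ∧ M.det ≠ 0 := by
  let φ : (Fin n → ℤ) → (Fin n → ℝ) := fun r j => r j
  have hφl : φ (Pi.single l 1) = Pi.single l 1 := by
    ext j
    by_cases h : j = l
    · subst h; simp [φ]
    · simp [φ, h]
  have hl : LinearIndepOn ℝ φ {Pi.single l 1} := by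
    refine LinearIndepOn.singleton ?_
    rw [hφl]
    simp
  obtain ⟨b, hbR, hlb, hspan, hli⟩ :=
    exists_linearIndepOn_extension hl (Set.singleton_subset_iff.2 (Set.mem_insert _ R))
  have htop : ⊤ ≤ Submodule.span ℝ (Set.range fun r : b => φ r) := by
    rw [← Set.image_eq_range, top_le_iff]
    by_contra hne
    obtain ⟨f, hf, hker⟩ := Submodule.exists_le_ker_of_lt_top _ (lt_top_iff_ne_top.2 hne)
    have hfw : ∀ r ∈ insert (Pi.single l 1) R, f (φ r) = 0 := fun r hr =>
      hker (hspan (Set.mem_image_of_mem φ hr))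
    refine hf (LinearMap.pi_ext' fun j => LinearMap.ext_ring ?_)
    refine congrFun (hR (fun j => f (Pi.single j 1)) ?_ fun r hr => ?_) j
    · simpa [hφl] using hfw _ (Set.mem_insert _ R)
    · have h := hfw r (Set.mem_insert_of_mem _ hr)
      rw [LinearMap.pi_apply_eq_sum_univ] at h
      rw [← h]
      refine Finset.sum_congr rfl fun j _ => ?_
      rw [smul_eq_mul]
      congr 2
      ext i
      simp [Pi.single_apply, eq_comm]
  let B := Module.Basis.mk hli htop
  let e : Fin n ≃ b := (Pi.basisFun ℝ (Fin n)).indexEquiv B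
  have hl' : Pi.single l 1 ∈ b := Set.singleton_subset_iff.1 hlb
  refine ⟨Matrix.of fun i => (e i : Fin n → ℤ), e.symm ⟨_, hl'⟩, by ext; simp, fun i hi => ?_, fun hdet => ?_⟩
  · refine (hbR (e i).2).resolve_left fun h => hi ?_
    rw [Equiv.eq_symm_apply]
    exact Subtype.ext h
  · have hrow : LinearIndependent ℝ
        (((Int.castRingHom ℝ).mapMatrix (Matrix.of fun i => (e i : Fin n → ℤ))).row) :=
      LinearIndependent.comp hli e e.injective
    rw [Matrix.linearIndependent_rows_iff_isUnit, Matrix.isUnit_iff_isUnit_det,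
      ← RingHom.map_det, hdet] at hrow
    simp at hrow

/-- A vector in the kernel of `A` supported on the support of a vertex solution is a multiple
of that vertex solution. -/
theorem IsVertexSolution.exists_eq_smul {m n : ℕ} {A : Matrix (Fin m) (Fin n) ℤ}
    {C : Finset (Fin n × Fin n)} {x : Fin n → ℝ} (hx : IsVertexSolution A C x) {v : Fin n → ℝ}
    (hv : ∀ i, ∑ j, (A i j : ℝ) * v j = 0) (hsupp : ∀ j, x j = 0 → v j = 0) :
    ∃ c : ℝ, v = c • x := by
  obtain ⟨⟨hxA, hx0, hxC⟩, -, hvert, -⟩ := hx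
  obtain ⟨ε, hε, hεv⟩ : ∃ ε : ℝ, 0 < ε ∧ ∀ j, ε * |v j| ≤ x j := by
    have h : ∀ j, ∀ᶠ ε : ℝ in nhdsWithin 0 (Set.Ioi 0), ε * |v j| ≤ x j := fun j => by
      rcases (hx0 j).eq_or_lt with h | h
      · simp [hsupp j h.symm, ← h]
      · have : Filter.Tendsto (fun ε : ℝ => ε * |v j|) (nhdsWithin 0 (Set.Ioi 0)) (nhds 0) :=
          tendsto_nhdsWithin_of_tendsto_nhds (Continuous.tendsto' (by fun_prop) _ _ (by simp))
        filter_upwards [this.eventually_lt_const h] with ε h using h.le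
    obtain ⟨ε, h, hε⟩ := ((Filter.eventually_all.2 h).and self_mem_nhdsWithin).exists
    exact ⟨ε, hε, h⟩
  have hsol : ∀ δ : ℝ, |δ| = ε → IsSolution A C (x + δ • v) := fun δ hδ => by
    refine ⟨fun i => ?_, fun j => ?_, fun p hp => ?_⟩
    · simp only [Pi.add_apply, Pi.smul_apply, smul_eq_mul, mul_add, mul_left_comm _ δ,
        Finset.sum_add_distrib, ← Finset.mul_sum, hxA, hv, mul_zero, add_zero]
    · have h := hεv j
      rw [← hδ, ← abs_mul] at h
      simpa using by linarith [neg_abs_le (δ * v j)]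
    · exact (hxC p hp).imp (fun h => by simp [h, hsupp _ h]) fun h => by simp [h, hsupp _ h]
  obtain ⟨⟨c, hc⟩, -⟩ := hvert 2 two_pos _ _ (hsol ε (abs_of_pos hε))
    (hsol (-ε) (by simp [abs_of_pos hε])) (by module)
  refine ⟨ε⁻¹ * (c - 1), ?_⟩
  rw [mul_smul, eq_inv_smul_iff₀ hε.ne', sub_smul, one_smul, ← hc, add_sub_cancel_left]

/-- The coordinates of a vertex solution are not all divisible by an integer `d ≥ 2`. -/
theorem IsVertexSolution.gcd_eq_one {m n : ℕ} {A : Matrix (Fin m) (Fin n) ℤ}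
    {C : Finset (Fin n × Fin n)} {z : Fin n → ℤ}
    (hx : IsVertexSolution A C fun j => (z j : ℝ)) : Finset.univ.gcd z = 1 := by
  obtain ⟨⟨hzA, hz0, hzC⟩, -, -, hprim⟩ := hx
  set g := Finset.univ.gcd z
  have hg0 : 0 ≤ g := Int.nonneg_of_normalize_eq_self Finset.normalize_gcd
  by_contra hg1
  have hne : g ≠ 0 := fun h => by
    have h0 : ∀ j, z j = 0 := fun j => Finset.gcd_eq_zero_iff.1 h j (Finset.mem_univ j)
    refine hprim ⟨2, fun j => (z j : ℝ), le_rfl, ⟨hzA, hz0, hzC⟩, fun j => ⟨z j, rfl⟩, ?_⟩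
    ext j
    simp [h0]
  choose w hw using fun j => Finset.gcd_dvd (f := z) (Finset.mem_univ j)
  have hw' : ∀ j, (z j : ℝ) = g * w j := fun j => by exact_mod_cast hw j
  have hgpos : (0 : ℝ) < g := by exact_mod_cast lt_of_le_of_ne hg0 hne.symm
  refine hprim ⟨g, fun j => w j, by lia, ⟨fun i => ?_, fun j => ?_, fun p hp => ?_⟩,
    fun j => ⟨w j, rfl⟩, funext hw'⟩
  · have h := hzA i
    simp only [hw', mul_left_comm _ (g : ℝ), ← Finset.mul_sum] at h
    exact (mul_eq_zero.1 h).resolve_left hgpos.ne'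
  · have h := hz0 j
    simp only [hw'] at h
    exact nonneg_of_mul_nonneg_right h hgpos
  · simpa [hw', hgpos.ne'] using hzC p hp

/-- If `d * z = z l * y` with `d ≠ 0` and `z` primitive, then `z` divides `y` coordinatewise
with nonzero quotient, so `z` is bounded by `y`. -/
theorem abs_le_abs_of_gcd_eq_one {ι : Type*} [Fintype ι] {z y : ι → ℤ} {l : ι} {d : ℤ}
    (hz : Finset.univ.gcd z = 1) (hl : z l ≠ 0) (hd : d ≠ 0)
    (h : ∀ j, d * z j = z l * y j) (j : ι) : |z j| ≤ |y j| := by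
  have hdvd : z l ∣ d := by
    have : z l ∣ Finset.univ.gcd fun j => d * z j :=
      Finset.dvd_gcd fun j _ => ⟨y j, h j⟩
    rwa [Finset.gcd_mul_left, hz, mul_one, dvd_normalize_iff] at this
  obtain ⟨c, rfl⟩ := hdvd
  have hc : c ≠ 0 := right_ne_zero_of_mul hd
  have hy : y j = c * z j := by
    have := h j
    rw [mul_assoc] at this
    exact (mul_left_cancel₀ hl this).symm
  rw [hy, abs_mul]
  exact le_mul_of_one_le_left (abs_nonneg _) (Int.one_le_abs hc)

/-- Theorem 8.1(1): if every row of `A` has ℓ² norm at most `k ≥ 1`, then every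
coordinate of every vertex solution to the system Σ is at most `n^(1/2) * k^(n-1)`. -/
theorem vertex_solution_coord_bound {m n : ℕ} (hm : 0 < m) (hn : 0 < n)
    (A : Matrix (Fin m) (Fin n) ℤ) (C : Finset (Fin n × Fin n))
    (k : ℝ) (hk : 1 ≤ k)
    (hA : ∀ i : Fin m, Real.sqrt (∑ j : Fin n, ((A i j : ℝ)) ^ 2) ≤ k)
    (x : Fin n → ℝ) (hx : IsVertexSolution A C x) (j : Fin n) :
    x j ≤ (n : ℝ) ^ ((1 : ℝ) / 2) * k ^ (n - 1) := by
  obtain ⟨z, rfl⟩ : ∃ z : Fin n → ℤ, x = fun j => (z j : ℝ) := by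
    choose z hz using hx.2.1
    exact ⟨z, funext hz⟩
  have hgcd := hx.gcd_eq_one
  obtain ⟨l, hl⟩ : ∃ l, z l ≠ 0 := by
    by_contra! h
    rw [Finset.gcd_eq_zero_iff.2 fun j _ => h j] at hgcd
    exact zero_ne_one hgcd
  let R : Set (Fin n → ℤ) := Set.range A ∪ (fun i => Pi.single i 1) '' {i | z i = 0}
  obtain ⟨M, i₀, hi₀, hMR, hdet⟩ := exists_det_ne_zero_of_orthogonal_eq_zero R l
    fun v hvl hv => by
      obtain ⟨c, rfl⟩ := hx.exists_eq_smul (v := v) (fun i => hv _ (Or.inl ⟨i, rfl⟩))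
        fun i hi => by
          simpa [Pi.single_apply] using hv _ (Or.inr ⟨i, by exact_mod_cast hi, rfl⟩)
      have hc : c = 0 := by simpa [hl] using hvl
      simp [hc]
  have hMz : M.mulVec z = Pi.single i₀ (z l) := by
    ext i
    by_cases hi : i = i₀
    · subst hi
      simp [Matrix.mulVec, hi₀]
    · rw [Pi.single_eq_of_ne hi]
      rcases hMR i hi with ⟨a, ha⟩ | ⟨a, ha, ha'⟩
      · have : ∑ j, (A a j : ℝ) * z j = 0 := hx.1.1 a
        simp only [Matrix.mulVec, dotProduct, ← ha]
        exact_mod_cast this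
      · simpa [Matrix.mulVec, ← ha'] using ha
  have hadj : ∀ j, M.det * z j = z l * M.adjugate j i₀ := fun j => by
    have h := congrFun (congrArg M.adjugate.mulVec hMz) j
    simpa [Matrix.mulVec_mulVec, Matrix.adjugate_mul, Matrix.smul_mulVec, mul_comm] using h
  have hrow : ∀ i ≠ i₀, √(∑ j, (M i j : ℝ) ^ 2) ≤ k := fun i hi => by
    rcases hMR i hi with ⟨a, ha⟩ | ⟨a, -, ha⟩
    · rw [← ha]
      exact hA a
    · rw [← ha]
      simpa [Pi.single_apply] using hk
  have hle : (z j : ℝ) ≤ |(M.adjugate j i₀ : ℝ)| := by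
    exact_mod_cast (le_abs_self _).trans (abs_le_abs_of_gcd_eq_one hgcd hl hdet hadj j)
  have hbound : |(M.adjugate j i₀ : ℝ)| ≤ k ^ (n - 1) := by
    rw [Matrix.adjugate_apply, Int.cast_det]
    refine (Matrix.abs_det_le_prod_sqrt_sum_sq _).trans ?_
    rw [← Finset.mul_prod_erase _ _ (Finset.mem_univ i₀)]
    have hone : √(∑ a, ((M.updateRow i₀ (Pi.single j 1)).map Int.cast i₀ a : ℝ) ^ 2) = 1 := by
      simp [Pi.single_apply]
    rw [hone, one_mul]
    refine (Finset.prod_le_prod (fun i _ => Real.sqrt_nonneg _) (g := fun _ => k)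
      fun i hi => ?_).trans_eq (by simp)
    simpa [Finset.ne_of_mem_erase hi] using hrow i (Finset.ne_of_mem_erase hi)
  have hsqrt : (1 : ℝ) ≤ (n : ℝ) ^ ((1 : ℝ) / 2) :=
    Real.one_le_rpow (by exact_mod_cast hn) (by norm_num)
  exact (hle.trans hbound).trans (le_mul_of_one_le_left (by positivity) hsqrt)
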